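/- arXiv:1009.5479 — 4 statements merged into one kernel-verified Lean document; each statement's English description precedes it below -/
import Mathlib

section
/- Let (A, Ω, T, ∗, { }, { }_Ω) be a vertex algebroid over ℂ, let φ: (A, Ω, T) → (A', Ω', T') be an isomorphism of extended Lie algebroids, and let Δ: T → Ω' be a ℂ-linear map. Define operations ∗': A'×T' → Ω', { }': T'×T' → A', { }'_Ω: T'×T' → Ω' by the formulas (φf) ∗' (φX) := φ(f∗X) + Δ(fX) − (φf)·Δ(X), {φX, φY}' := φ{X,Y} − Δ(X)(φY) − Δ(Y)(φX), and {φX, φY}'_Ω := φ{X,Y}_Ω − L_{φX}Δ(Y) + L_{φY}Δ(X) − d(Δ(X)(φY)) + Δ([X,Y]), for f ∈ A and X, Y ∈ T (these determine the operations since φ is bijective). Then (A', Ω', T', ∗', { }', { }'_Ω) is a vertex algebroid, and the pair (φ, Δ) is an isomorphism between the two vertex algebroids. -/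
universe u v w u' v' w' u'' v'' w''

/-- An extended Lie algebroid over ℂ, on carrier types `A` (functions),
`Ω` (1-forms) and `T` (vector fields). -/
structure ExtLieAlgebroid (A : Type u) (Ω : Type v) (T : Type w)
    [CommRing A] [Algebra ℂ A]
    [AddCommGroup Ω] [Module ℂ Ω] [Module A Ω] [IsScalarTower ℂ A Ω]
    [AddCommGroup T] [Module ℂ T] [Module A T] [IsScalarTower ℂ A T] where
  /-- the derivation `d : A → Ω` (ℂ-linear) -/
  d : A →ₗ[ℂ] Ω
  d_mul : ∀ f g : A, d (f * g) = f • d g + g • d f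
  /-- the image of `d` generates `Ω` as an `A`-module -/
  d_span : ∀ ω : Ω, ω ∈ Submodule.span A (Set.range d)
  /-- the Lie bracket on `T` -/
  bracket : T → T → T
  bracket_add_left : ∀ X Y Z, bracket (X + Y) Z = bracket X Z + bracket Y Z
  bracket_add_right : ∀ X Y Z, bracket X (Y + Z) = bracket X Y + bracket X Z
  bracket_smulC_left : ∀ (c : ℂ) (X Y), bracket (c • X) Y = c • bracket X Y
  bracket_smulC_right : ∀ (c : ℂ) (X Y), bracket X (c • Y) = c • bracket X Y
  bracket_skew : ∀ X Y, bracket X Y = - bracket Y X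
  bracket_jacobi : ∀ X Y Z,
    bracket X (bracket Y Z) = bracket (bracket X Y) Z + bracket Y (bracket X Z)
  /-- the action of `T` on `A` by derivations, `X ↦ (f ↦ Xf)`; it is `A`-linear in `X` -/
  act : T → A → A
  act_add_left : ∀ X Y f, act (X + Y) f = act X f + act Y f
  act_smulA_left : ∀ (f : A) (X) (g), act (f • X) g = f * act X g
  act_add_right : ∀ X f g, act X (f + g) = act X f + act X g
  act_smulC_right : ∀ (X) (c : ℂ) (f), act X (c • f) = c • act X f
  act_mul : ∀ X f g, act X (f * g) = f * act X g + g * act X f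
  act_bracket : ∀ X Y f, act (bracket X Y) f = act X (act Y f) - act Y (act X f)
  /-- the ℂ-linear Lie algebra action `X ↦ L_X` of `T` on `Ω` -/
  lie : T → Ω → Ω
  lie_add_left : ∀ X Y α, lie (X + Y) α = lie X α + lie Y α
  lie_smulC_left : ∀ (c : ℂ) (X) (α), lie (c • X) α = c • lie X α
  lie_add_right : ∀ X α β, lie X (α + β) = lie X α + lie X β
  lie_smulC_right : ∀ (X) (c : ℂ) (α), lie X (c • α) = c • lie X α
  lie_bracket : ∀ X Y α, lie (bracket X Y) α = lie X (lie Y α) - lie Y (lie X α)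
  /-- the `A`-bilinear pairing `(α, X) ↦ α(X)` -/
  pair : Ω → T → A
  pair_add_left : ∀ α β X, pair (α + β) X = pair α X + pair β X
  pair_smulA_left : ∀ (f : A) (α X), pair (f • α) X = f * pair α X
  pair_add_right : ∀ α X Y, pair α (X + Y) = pair α X + pair α Y
  pair_smulA_right : ∀ (f : A) (α X), pair α (f • X) = f * pair α X
  /-- the `T`-action on `Ω` commutes with `d` (together with `act_smulC_right`,
  the `T`-action on `A` commutes with `d` as well) -/
  lie_d : ∀ X f, lie X (d f) = d (act X f)
  /-- Leibniz rule for the `T`-action on `Ω` -/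
  lie_smulA : ∀ (X) (f : A) (α), lie X (f • α) = f • lie X α + act X f • α
  /-- Leibniz rule for the `T`-action on `T` -/
  bracket_smulA_right : ∀ (X) (f : A) (Y),
    bracket X (f • Y) = f • bracket X Y + act X f • Y
  /-- `df(X) = Xf` -/
  pair_d : ∀ f X, pair (d f) X = act X f

variable {A : Type u} {Ω : Type v} {T : Type w}
  [CommRing A] [Algebra ℂ A]
  [AddCommGroup Ω] [Module ℂ Ω] [Module A Ω] [IsScalarTower ℂ A Ω]
  [AddCommGroup T] [Module ℂ T] [Module A T] [IsScalarTower ℂ A T]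
  {A' : Type u'} {Ω' : Type v'} {T' : Type w'}
  [CommRing A'] [Algebra ℂ A']
  [AddCommGroup Ω'] [Module ℂ Ω'] [Module A' Ω'] [IsScalarTower ℂ A' Ω']
  [AddCommGroup T'] [Module ℂ T'] [Module A' T'] [IsScalarTower ℂ A' T']

/-- The property, for ℂ-bilinear operations `(∗, { }, { }_Ω)` on an extended Lie
algebroid, of forming a vertex algebroid (axioms (1)–(7)). -/
structure IsVertexAlgebroid (E : ExtLieAlgebroid A Ω T)
    (star : A → T → Ω) (br : T → T → A) (brΩ : T → T → Ω) : Prop where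
  star_add_left : ∀ f g X, star (f + g) X = star f X + star g X
  star_smulC_left : ∀ (c : ℂ) (f X), star (c • f) X = c • star f X
  star_add_right : ∀ f X Y, star f (X + Y) = star f X + star f Y
  star_smulC_right : ∀ (f) (c : ℂ) (X), star f (c • X) = c • star f X
  br_add_left : ∀ X Y Z, br (X + Y) Z = br X Z + br Y Z
  br_smulC_left : ∀ (c : ℂ) (X Y), br (c • X) Y = c • br X Y
  br_add_right : ∀ X Y Z, br X (Y + Z) = br X Y + br X Z
  br_smulC_right : ∀ (X) (c : ℂ) (Y), br X (c • Y) = c • br X Y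
  brΩ_add_left : ∀ X Y Z, brΩ (X + Y) Z = brΩ X Z + brΩ Y Z
  brΩ_smulC_left : ∀ (c : ℂ) (X Y), brΩ (c • X) Y = c • brΩ X Y
  brΩ_add_right : ∀ X Y Z, brΩ X (Y + Z) = brΩ X Y + brΩ X Z
  brΩ_smulC_right : ∀ (X) (c : ℂ) (Y), brΩ X (c • Y) = c • brΩ X Y
  ax1 : ∀ X Y, br X Y = br Y X
  ax2 : ∀ X Y, E.d (br X Y) = brΩ X Y + brΩ Y X
  ax3 : ∀ f g X, star (f * g) X - star f (g • X) - f • star g X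
    = -(E.act X f) • E.d g - (E.act X g) • E.d f
  ax4 : ∀ (f : A) (X Y), br X (f • Y) - f * br X Y
    = - E.pair (star f Y) X - E.act Y (E.act X f)
  ax5 : ∀ (f : A) (X Y), brΩ X (f • Y) - f • brΩ X Y
    = - E.lie X (star f Y) + star (E.act X f) Y + star f (E.bracket X Y)
  ax6 : ∀ X Y Z, E.act X (br Y Z) - br (E.bracket X Y) Z - br Y (E.bracket X Z)
    = E.pair (brΩ X Y) Z + E.pair (brΩ X Z) Y
  ax7 : ∀ X Y Z,
    E.lie X (brΩ Y Z) - E.lie Y (brΩ X Z) + E.lie Z (brΩ X Y)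
      + brΩ X (E.bracket Y Z) - brΩ Y (E.bracket X Z) - brΩ (E.bracket X Y) Z
    = E.d (E.pair (brΩ X Y) Z)

/-- A triple of maps `(fA, fΩ, fT)` is a morphism of extended Lie algebroids if it
respects all of the structure. -/
structure IsExtLieAlgebroidHom (E : ExtLieAlgebroid A Ω T) (E' : ExtLieAlgebroid A' Ω' T')
    (fA : A → A') (fΩ : Ω → Ω') (fT : T → T') : Prop where
  fA_one : fA 1 = 1
  fA_add : ∀ f g, fA (f + g) = fA f + fA g
  fA_mul : ∀ f g, fA (f * g) = fA f * fA g
  fA_smulC : ∀ (c : ℂ) (f), fA (c • f) = c • fA f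
  fΩ_add : ∀ α β, fΩ (α + β) = fΩ α + fΩ β
  fΩ_smulA : ∀ (f : A) (α), fΩ (f • α) = fA f • fΩ α
  fT_add : ∀ X Y, fT (X + Y) = fT X + fT Y
  fT_smulA : ∀ (f : A) (X), fT (f • X) = fA f • fT X
  map_d : ∀ f, fΩ (E.d f) = E'.d (fA f)
  map_bracket : ∀ X Y, fT (E.bracket X Y) = E'.bracket (fT X) (fT Y)
  map_act : ∀ X f, fA (E.act X f) = E'.act (fT X) (fA f)
  map_lie : ∀ X α, fΩ (E.lie X α) = E'.lie (fT X) (fΩ α)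
  map_pair : ∀ α X, fA (E.pair α X) = E'.pair (fΩ α) (fT X)

/-- A pair `(φ, Δ) = ((fA, fΩ, fT), Δ)` is a morphism of vertex algebroids if `φ` is a
morphism of the underlying extended Lie algebroids, `Δ : T → Ω'` is ℂ-linear, and the
three compatibility equations (i), (ii), (iii) hold. -/
structure IsVertexAlgebroidHom
    (E : ExtLieAlgebroid A Ω T) (star : A → T → Ω) (br : T → T → A) (brΩ : T → T → Ω)
    (E' : ExtLieAlgebroid A' Ω' T') (star' : A' → T' → Ω') (br' : T' → T' → A')
    (brΩ' : T' → T' → Ω')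
    (fA : A → A') (fΩ : Ω → Ω') (fT : T → T') (Δ : T → Ω') : Prop where
  ext_hom : IsExtLieAlgebroidHom E E' fA fΩ fT
  Δ_add : ∀ X Y, Δ (X + Y) = Δ X + Δ Y
  Δ_smulC : ∀ (c : ℂ) (X), Δ (c • X) = c • Δ X
  eq_star : ∀ (f : A) (X : T),
    star' (fA f) (fT X) - fΩ (star f X) = Δ (f • X) - fA f • Δ X
  eq_br : ∀ X Y, br' (fT X) (fT Y) - fA (br X Y)
    = - E'.pair (Δ X) (fT Y) - E'.pair (Δ Y) (fT X)
  eq_brΩ : ∀ X Y, brΩ' (fT X) (fT Y) - fΩ (brΩ X Y)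
    = - E'.lie (fT X) (Δ Y) + E'.lie (fT Y) (Δ X)
      - E'.d (E'.pair (Δ X) (fT Y)) + Δ (E.bracket X Y)

/-!
STATEMENT 0: Transporting a vertex algebroid structure along an isomorphism of
extended Lie algebroids `φ = (fA, fΩ, fT)` together with a ℂ-linear map `Δ : T → Ω'`:
the operations `∗'`, `{ }'`, `{ }'_Ω` defined by the morphism formulas make the target
an extended Lie algebroid into a vertex algebroid, and `(φ, Δ)` is then an isomorphism
of vertex algebroids (its underlying map `φ` being bijective).
-/

namespace ExtLieAlgebroid

variable (E : ExtLieAlgebroid A Ω T)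

theorem act_sub_right (X : T) (f g : A) : E.act X (f - g) = E.act X f - E.act X g :=
  (AddMonoidHom.mk' (E.act X) (E.act_add_right X)).map_sub f g

theorem lie_sub_right (X : T) (α β : Ω) : E.lie X (α - β) = E.lie X α - E.lie X β :=
  (AddMonoidHom.mk' (E.lie X) (E.lie_add_right X)).map_sub α β

theorem pair_sub_left (α β : Ω) (X : T) : E.pair (α - β) X = E.pair α X - E.pair β X :=
  (AddMonoidHom.mk' (E.pair · X) fun α β => E.pair_add_left α β X).map_sub α β

theorem pair_neg_right (α : Ω) (X : T) : E.pair α (-X) = -E.pair α X :=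
  (AddMonoidHom.mk' (E.pair α) (E.pair_add_right α)).map_neg X

theorem pair_smulC_left (c : ℂ) (α : Ω) (X : T) : E.pair (c • α) X = c • E.pair α X := by
  rw [← algebraMap_smul A c α, E.pair_smulA_left, Algebra.smul_def]

theorem pair_smulC_right (c : ℂ) (α : Ω) (X : T) : E.pair α (c • X) = c • E.pair α X := by
  rw [← algebraMap_smul A c X, E.pair_smulA_right, Algebra.smul_def]

/-- Since `Ω` is generated by exact forms, an additive property closed under
multiplication by functions need only be checked on those. -/
theorem form_induction {p : Ω → Prop} (hd : ∀ f, p (E.d f))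
    (hadd : ∀ α β, p α → p β → p (α + β)) (hsmul : ∀ (f : A) α, p α → p (f • α))
    (α : Ω) : p α := by
  refine Submodule.span_induction (p := fun α _ => p α) ?_ ?_ ?_ ?_ (E.d_span α)
  · rintro _ ⟨f, rfl⟩
    exact hd f
  · simpa using hd 0
  · exact fun α β _ _ => hadd α β
  · exact fun f α _ => hsmul f α

/-- The pairing is invariant under the action of `T`. -/
theorem act_pair (X Y : T) (α : Ω) :
    E.act X (E.pair α Y) = E.pair (E.lie X α) Y + E.pair α (E.bracket X Y) := by
  induction α using E.form_induction with
  | hd f => rw [E.lie_d, E.pair_d, E.pair_d, E.pair_d, E.act_bracket]; abel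
  | hadd α β hα hβ =>
    simp only [E.pair_add_left, E.act_add_right, E.lie_add_right, hα, hβ]; abel
  | hsmul f α hα =>
    simp only [E.pair_add_left, E.pair_smulA_left, E.act_mul, E.lie_smulA, hα]; ring

/-- The failure of `X ↦ L_X` to be `A`-linear. -/
theorem lie_smulA_left (f : A) (X : T) (α : Ω) :
    E.lie (f • X) α = f • E.lie X α + E.pair α X • E.d f := by
  induction α using E.form_induction with
  | hd g => rw [E.lie_d, E.lie_d, E.act_smulA_left, E.d_mul, E.pair_d]
  | hadd α β hα hβ =>
    simp only [E.pair_add_left, E.lie_add_right, hα, hβ]; module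
  | hsmul g α hα =>
    simp only [E.pair_smulA_left, E.lie_smulA, E.act_smulA_left, hα]; module

end ExtLieAlgebroid

namespace IsExtLieAlgebroidHom

variable {E : ExtLieAlgebroid A Ω T} {E' : ExtLieAlgebroid A' Ω' T'}
  {fA : A → A'} {fΩ : Ω → Ω'} {fT : T → T'}

theorem fA_neg (h : IsExtLieAlgebroidHom E E' fA fΩ fT) (f : A) : fA (-f) = -fA f :=
  (AddMonoidHom.mk' fA h.fA_add).map_neg f

theorem fA_sub (h : IsExtLieAlgebroidHom E E' fA fΩ fT) (f g : A) : fA (f - g) = fA f - fA g :=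
  (AddMonoidHom.mk' fA h.fA_add).map_sub f g

theorem fΩ_neg (h : IsExtLieAlgebroidHom E E' fA fΩ fT) (α : Ω) : fΩ (-α) = -fΩ α :=
  (AddMonoidHom.mk' fΩ h.fΩ_add).map_neg α

theorem fΩ_sub (h : IsExtLieAlgebroidHom E E' fA fΩ fT) (α β : Ω) : fΩ (α - β) = fΩ α - fΩ β :=
  (AddMonoidHom.mk' fΩ h.fΩ_add).map_sub α β

theorem fA_algebraMap (h : IsExtLieAlgebroidHom E E' fA fΩ fT) (c : ℂ) :
    fA (algebraMap ℂ A c) = algebraMap ℂ A' c := by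
  rw [Algebra.algebraMap_eq_smul_one, h.fA_smulC, h.fA_one, Algebra.algebraMap_eq_smul_one]

theorem fΩ_smulC (h : IsExtLieAlgebroidHom E E' fA fΩ fT) (c : ℂ) (α : Ω) :
    fΩ (c • α) = c • fΩ α := by
  rw [← algebraMap_smul A c α, h.fΩ_smulA, h.fA_algebraMap, algebraMap_smul]

theorem fT_smulC (h : IsExtLieAlgebroidHom E E' fA fΩ fT) (c : ℂ) (X : T) :
    fT (c • X) = c • fT X := by
  rw [← algebraMap_smul A c X, h.fT_smulA, h.fA_algebraMap, algebraMap_smul]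

end IsExtLieAlgebroidHom

theorem transport_vertexAlgebroid_along_iso
    (E : ExtLieAlgebroid A Ω T) (star : A → T → Ω) (br : T → T → A) (brΩ : T → T → Ω)
    (hV : IsVertexAlgebroid E star br brΩ)
    (E' : ExtLieAlgebroid A' Ω' T')
    (fA : A → A') (fΩ : Ω → Ω') (fT : T → T')
    (hhom : IsExtLieAlgebroidHom E E' fA fΩ fT)
    (hA : Function.Bijective fA) (hΩ : Function.Bijective fΩ)
    (hT : Function.Bijective fT)
    (Δ : T → Ω')
    (hΔ_add : ∀ X Y, Δ (X + Y) = Δ X + Δ Y)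
    (hΔ_smulC : ∀ (c : ℂ) (X), Δ (c • X) = c • Δ X)
    (star' : A' → T' → Ω') (br' : T' → T' → A') (brΩ' : T' → T' → Ω')
    (hstar' : ∀ (f : A) (X : T),
      star' (fA f) (fT X) = fΩ (star f X) + Δ (f • X) - fA f • Δ X)
    (hbr' : ∀ X Y, br' (fT X) (fT Y)
      = fA (br X Y) - E'.pair (Δ X) (fT Y) - E'.pair (Δ Y) (fT X))
    (hbrΩ' : ∀ X Y, brΩ' (fT X) (fT Y)
      = fΩ (brΩ X Y) - E'.lie (fT X) (Δ Y) + E'.lie (fT Y) (Δ X)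
        - E'.d (E'.pair (Δ X) (fT Y)) + Δ (E.bracket X Y)) :
    IsVertexAlgebroid E' star' br' brΩ' ∧
    IsVertexAlgebroidHom E star br brΩ E' star' br' brΩ' fA fΩ fT Δ := by
  have hΔ_neg : ∀ X, Δ (-X) = -Δ X := (AddMonoidHom.mk' Δ hΔ_add).map_neg
  have smul_comm_left : ∀ (f : A) (c : ℂ) (X : T), f • c • X = c • f • X := fun f c X => by
    rw [← algebraMap_smul A c X, ← algebraMap_smul A c (f • X), smul_smul, smul_smul, mul_comm]
  have smul_comm_left' : ∀ (f : A') (c : ℂ) (α : Ω'), f • c • α = c • f • α := fun f c α => by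
    rw [← algebraMap_smul A' c α, ← algebraMap_smul A' c (f • α), smul_smul, smul_smul, mul_comm]
  refine ⟨?_, hhom, hΔ_add, hΔ_smulC, fun f X => ?_, fun X Y => ?_, fun X Y => ?_⟩
  · constructor
    case star_add_left =>
      intro f g X
      obtain ⟨f, rfl⟩ := hA.2 f
      obtain ⟨g, rfl⟩ := hA.2 g
      obtain ⟨X, rfl⟩ := hT.2 X
      rw [← hhom.fA_add, hstar', hstar', hstar', hV.star_add_left, hhom.fΩ_add, add_smul,
        hΔ_add, hhom.fA_add]
      module
    case star_smulC_left =>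
      intro c f X
      obtain ⟨f, rfl⟩ := hA.2 f
      obtain ⟨X, rfl⟩ := hT.2 X
      rw [← hhom.fA_smulC, hstar', hstar', hV.star_smulC_left, hhom.fΩ_smulC, smul_assoc,
        hΔ_smulC, hhom.fA_smulC, smul_assoc]
      module
    case star_add_right =>
      intro f X Y
      obtain ⟨f, rfl⟩ := hA.2 f
      obtain ⟨X, rfl⟩ := hT.2 X
      obtain ⟨Y, rfl⟩ := hT.2 Y
      rw [← hhom.fT_add, hstar', hstar', hstar', hV.star_add_right, hhom.fΩ_add, smul_add,
        hΔ_add, hΔ_add]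
      module
    case star_smulC_right =>
      intro f c X
      obtain ⟨f, rfl⟩ := hA.2 f
      obtain ⟨X, rfl⟩ := hT.2 X
      rw [← hhom.fT_smulC, hstar', hstar', hV.star_smulC_right, hhom.fΩ_smulC, smul_comm_left,
        hΔ_smulC, hΔ_smulC, smul_comm_left']
      module
    case br_add_left =>
      intro X Y Z
      obtain ⟨X, rfl⟩ := hT.2 X
      obtain ⟨Y, rfl⟩ := hT.2 Y
      obtain ⟨Z, rfl⟩ := hT.2 Z
      rw [← hhom.fT_add, hbr', hbr', hbr', hV.br_add_left, hhom.fA_add, hΔ_add, hhom.fT_add,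
        E'.pair_add_left, E'.pair_add_right]
      ring
    case br_smulC_left =>
      intro c X Y
      obtain ⟨X, rfl⟩ := hT.2 X
      obtain ⟨Y, rfl⟩ := hT.2 Y
      rw [← hhom.fT_smulC, hbr', hbr', hV.br_smulC_left, hhom.fA_smulC, hΔ_smulC, hhom.fT_smulC,
        E'.pair_smulC_left, E'.pair_smulC_right]
      module
    case br_add_right =>
      intro X Y Z
      obtain ⟨X, rfl⟩ := hT.2 X
      obtain ⟨Y, rfl⟩ := hT.2 Y
      obtain ⟨Z, rfl⟩ := hT.2 Z
      rw [← hhom.fT_add, hbr', hbr', hbr', hV.br_add_right, hhom.fA_add, hΔ_add, hhom.fT_add,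
        E'.pair_add_left, E'.pair_add_right]
      ring
    case br_smulC_right =>
      intro X c Y
      obtain ⟨X, rfl⟩ := hT.2 X
      obtain ⟨Y, rfl⟩ := hT.2 Y
      rw [← hhom.fT_smulC, hbr', hbr', hV.br_smulC_right, hhom.fA_smulC, hΔ_smulC, hhom.fT_smulC,
        E'.pair_smulC_left, E'.pair_smulC_right]
      module
    case brΩ_add_left =>
      intro X Y Z
      obtain ⟨X, rfl⟩ := hT.2 X
      obtain ⟨Y, rfl⟩ := hT.2 Y
      obtain ⟨Z, rfl⟩ := hT.2 Z
      rw [← hhom.fT_add, hbrΩ', hbrΩ', hbrΩ', hV.brΩ_add_left, hhom.fΩ_add, hΔ_add, hhom.fT_add,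
        E'.lie_add_left, E'.lie_add_right, E'.pair_add_left, map_add, E.bracket_add_left, hΔ_add]
      module
    case brΩ_smulC_left =>
      intro c X Y
      obtain ⟨X, rfl⟩ := hT.2 X
      obtain ⟨Y, rfl⟩ := hT.2 Y
      rw [← hhom.fT_smulC, hbrΩ', hbrΩ', hV.brΩ_smulC_left, hhom.fΩ_smulC, hΔ_smulC,
        hhom.fT_smulC, E'.lie_smulC_left, E'.lie_smulC_right, E'.pair_smulC_left, map_smul,
        E.bracket_smulC_left, hΔ_smulC]
      module
    case brΩ_add_right =>
      intro X Y Z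
      obtain ⟨X, rfl⟩ := hT.2 X
      obtain ⟨Y, rfl⟩ := hT.2 Y
      obtain ⟨Z, rfl⟩ := hT.2 Z
      rw [← hhom.fT_add, hbrΩ', hbrΩ', hbrΩ', hV.brΩ_add_right, hhom.fΩ_add, hΔ_add, hhom.fT_add,
        E'.lie_add_left, E'.lie_add_right, E'.pair_add_right, map_add, E.bracket_add_right, hΔ_add]
      module
    case brΩ_smulC_right =>
      intro X c Y
      obtain ⟨X, rfl⟩ := hT.2 X
      obtain ⟨Y, rfl⟩ := hT.2 Y
      rw [← hhom.fT_smulC, hbrΩ', hbrΩ', hV.brΩ_smulC_right, hhom.fΩ_smulC, hΔ_smulC,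
        hhom.fT_smulC, E'.lie_smulC_left, E'.lie_smulC_right, E'.pair_smulC_right, map_smul,
        E.bracket_smulC_right, hΔ_smulC]
      module
    case ax1 =>
      intro X Y
      obtain ⟨X, rfl⟩ := hT.2 X
      obtain ⟨Y, rfl⟩ := hT.2 Y
      rw [hbr', hbr', hV.ax1 X Y]
      ring
    case ax2 =>
      intro X Y
      obtain ⟨X, rfl⟩ := hT.2 X
      obtain ⟨Y, rfl⟩ := hT.2 Y
      have h := congrArg fΩ (hV.ax2 X Y)
      rw [hhom.map_d, hhom.fΩ_add] at h
      rw [hbr', hbrΩ', hbrΩ', E.bracket_skew Y X, hΔ_neg, map_sub, map_sub, h]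
      abel
    case ax3 =>
      intro f g X
      obtain ⟨f, rfl⟩ := hA.2 f
      obtain ⟨g, rfl⟩ := hA.2 g
      obtain ⟨X, rfl⟩ := hT.2 X
      have h := congrArg fΩ (hV.ax3 f g X)
      simp only [hhom.fΩ_sub, hhom.fΩ_smulA, hhom.fA_neg, hhom.map_act, hhom.map_d] at h
      rw [← h, ← hhom.fA_mul, ← hhom.fT_smulA, hstar', hstar', hstar', hhom.fA_mul, mul_smul]
      module
    case ax4 =>
      intro f X Y
      obtain ⟨f, rfl⟩ := hA.2 f
      obtain ⟨X, rfl⟩ := hT.2 X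
      obtain ⟨Y, rfl⟩ := hT.2 Y
      have h := congrArg fA (hV.ax4 f X Y)
      simp only [hhom.fA_sub, hhom.fA_mul, hhom.fA_neg, hhom.map_act, hhom.map_pair] at h
      rw [← hhom.fT_smulA, hbr', hbr', hstar', hhom.fT_smulA, E'.pair_smulA_right,
        E'.pair_sub_left, E'.pair_add_left, E'.pair_smulA_left]
      linear_combination h
    case ax5 =>
      intro f X Y
      obtain ⟨f, rfl⟩ := hA.2 f
      obtain ⟨X, rfl⟩ := hT.2 X
      obtain ⟨Y, rfl⟩ := hT.2 Y
      have h := congrArg fΩ (hV.ax5 f X Y)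
      simp only [hhom.fΩ_add, hhom.fΩ_sub, hhom.fΩ_smulA, hhom.fΩ_neg, hhom.map_lie] at h
      rw [← hhom.fT_smulA, ← hhom.map_act, ← hhom.map_bracket, hbrΩ', hbrΩ', hstar', hstar',
        hstar', hhom.fT_smulA, hhom.map_act, E'.pair_smulA_right, E'.d_mul, E'.lie_smulA_left,
        E.bracket_smulA_right, hΔ_add, E'.lie_sub_right, E'.lie_add_right, E'.lie_smulA]
      linear_combination (norm := module) h
    case ax6 =>
      intro X Y Z
      obtain ⟨X, rfl⟩ := hT.2 X
      obtain ⟨Y, rfl⟩ := hT.2 Y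
      obtain ⟨Z, rfl⟩ := hT.2 Z
      have h := congrArg fA (hV.ax6 X Y Z)
      simp only [hhom.fA_add, hhom.fA_sub, hhom.map_act, hhom.map_pair] at h
      have hskew := E'.bracket_skew (fT Z) (fT Y)
      simp only [← hhom.map_bracket, hbr', hbrΩ']
      simp only [hhom.map_bracket, E'.act_sub_right, E'.pair_add_left, E'.pair_sub_left,
        E'.pair_d, E'.act_pair, hskew, E'.pair_neg_right]
      linear_combination h
    case ax7 =>
      intro X Y Z
      obtain ⟨X, rfl⟩ := hT.2 X
      obtain ⟨Y, rfl⟩ := hT.2 Y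
      obtain ⟨Z, rfl⟩ := hT.2 Z
      have h := congrArg fΩ (hV.ax7 X Y Z)
      simp only [hhom.fΩ_add, hhom.fΩ_sub, hhom.map_lie, hhom.map_d, hhom.map_pair] at h
      have hjacobi := congrArg Δ (E.bracket_jacobi X Y Z)
      rw [hΔ_add] at hjacobi
      simp only [← hhom.map_bracket, hbrΩ']
      simp only [hhom.map_bracket, E'.lie_add_right, E'.lie_sub_right, E'.lie_d, E'.lie_bracket,
        E'.pair_add_left, E'.pair_sub_left, E'.pair_d, E'.act_pair, map_add, map_sub, hjacobi]
      linear_combination (norm := module) h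
  · rw [hstar']
    abel
  · rw [hbr']
    ring
  · rw [hbrΩ']
    abel
end

section
/- Let (A, Ω, T, ∗, { }, { }_Ω) and (A', Ω', T', ∗', { }', { }'_Ω) be vertex algebroids over ℂ, let φ: (A, Ω, T) → (A', Ω', T') be a morphism of extended Lie algebroids, let Δ: T → Ω' be a ℂ-linear map, and let S ⊆ T be a subset that is closed under the Lie bracket [ ] and spans T as an A-module. If the three morphism equations (i) φf ∗' φX − φ(f∗X) = Δ(fX) − (φf)Δ(X), (ii) {φX, φY}' − φ{X,Y} = −Δ(X)(φY) − Δ(Y)(φX), (iii) {φX, φY}'_Ω − φ{X,Y}_Ω = −L_{φX}Δ(Y) + L_{φY}Δ(X) − d(Δ(X)(φY)) + Δ([X,Y]) hold for all (f, X, Y) ∈ A × S × S, then they hold for all (f, X, Y) ∈ A × T × T, and hence (φ, Δ) is a morphism between the two vertex algebroids. -/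
universe u v w u' v' w' u'' v'' w''

variable {A : Type u} {Ω : Type v} {T : Type w}
  [CommRing A] [Algebra ℂ A]
  [AddCommGroup Ω] [Module ℂ Ω] [Module A Ω] [IsScalarTower ℂ A Ω]
  [AddCommGroup T] [Module ℂ T] [Module A T] [IsScalarTower ℂ A T]
  {A' : Type u'} {Ω' : Type v'} {T' : Type w'}
  [CommRing A'] [Algebra ℂ A']
  [AddCommGroup Ω'] [Module ℂ Ω'] [Module A' Ω'] [IsScalarTower ℂ A' Ω']
  [AddCommGroup T'] [Module ℂ T'] [Module A' T'] [IsScalarTower ℂ A' T']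

/-- The Cartan-type identity `L_{fX} α = f L_X α + α(X) df`. -/
theorem ExtLieAlgebroid.lie_smulA_left_s1 (E : ExtLieAlgebroid A Ω T) (f : A) (X : T) (α : Ω) :
    E.lie (f • X) α = f • E.lie X α + E.pair α X • E.d f := by
  have zero_right : ∀ Z : T, E.lie Z 0 = 0 := fun Z ↦
    map_zero (AddMonoidHom.mk' _ (E.lie_add_right Z))
  have zero_left : E.pair 0 X = 0 :=
    map_zero (AddMonoidHom.mk' (fun β ↦ E.pair β X) fun β γ ↦ E.pair_add_left β γ X)
  induction E.d_span α using Submodule.span_induction with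
  | mem β hβ =>
    obtain ⟨h, rfl⟩ := hβ
    rw [E.lie_d, E.lie_d, E.pair_d, E.act_smulA_left, E.d_mul]
  | zero => simp [zero_right, zero_left]
  | add β γ _ _ hβ hγ =>
    rw [E.lie_add_right, E.lie_add_right, E.pair_add_left, hβ, hγ]
    module
  | smul g β _ hβ =>
    rw [E.lie_smulA, E.lie_smulA, E.pair_smulA_left, E.act_smulA_left, hβ]
    module

theorem eq_star_smul
    (E : ExtLieAlgebroid A Ω T) {star : A → T → Ω} {br : T → T → A} {brΩ : T → T → Ω}
    (hV : IsVertexAlgebroid E star br brΩ)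
    (E' : ExtLieAlgebroid A' Ω' T') {star' : A' → T' → Ω'} {br' : T' → T' → A'}
    {brΩ' : T' → T' → Ω'}
    (hV' : IsVertexAlgebroid E' star' br' brΩ')
    {fA : A → A'} {fΩ : Ω → Ω'} {fT : T → T'}
    (hhom : IsExtLieAlgebroidHom E E' fA fΩ fT)
    {Δ : T → Ω'}
    {f g : A} {X : T}
    (hfg : star' (fA (f * g)) (fT X) - fΩ (star (f * g) X) = Δ ((f * g) • X) - fA (f * g) • Δ X)
    (hg : star' (fA g) (fT X) - fΩ (star g X) = Δ (g • X) - fA g • Δ X) :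
    star' (fA f) (fT (g • X)) - fΩ (star f (g • X)) = Δ (f • (g • X)) - fA f • Δ (g • X) := by
  have sub := map_sub (AddMonoidHom.mk' fΩ hhom.fΩ_add)
  have neg := map_neg (AddMonoidHom.mk' fA hhom.fA_add)
  simp only [AddMonoidHom.mk'_apply] at sub neg
  have h := congrArg fΩ (hV.ax3 f g X)
  have h' := hV'.ax3 (fA f) (fA g) (fT X)
  simp only [sub, neg, hhom.fΩ_smulA, hhom.map_d, hhom.map_act] at h
  rw [hhom.fA_mul, mul_smul] at hfg
  rw [hhom.fT_smulA]
  linear_combination (norm := module) hfg - fA f • hg + h - h'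

theorem eq_br_smul
    (E : ExtLieAlgebroid A Ω T) {star : A → T → Ω} {br : T → T → A} {brΩ : T → T → Ω}
    (hV : IsVertexAlgebroid E star br brΩ)
    (E' : ExtLieAlgebroid A' Ω' T') {star' : A' → T' → Ω'} {br' : T' → T' → A'}
    {brΩ' : T' → T' → Ω'}
    (hV' : IsVertexAlgebroid E' star' br' brΩ')
    {fA : A → A'} {fΩ : Ω → Ω'} {fT : T → T'}
    (hhom : IsExtLieAlgebroidHom E E' fA fΩ fT)
    {Δ : T → Ω'}
    {g : A} {X Y : T}
    (hg : star' (fA g) (fT Y) - fΩ (star g Y) = Δ (g • Y) - fA g • Δ Y)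
    (hXY : br' (fT X) (fT Y) - fA (br X Y)
      = - E'.pair (Δ X) (fT Y) - E'.pair (Δ Y) (fT X)) :
    br' (fT X) (fT (g • Y)) - fA (br X (g • Y))
      = - E'.pair (Δ X) (fT (g • Y)) - E'.pair (Δ (g • Y)) (fT X) := by
  have sub := map_sub (AddMonoidHom.mk' fA hhom.fA_add)
  have neg := map_neg (AddMonoidHom.mk' fA hhom.fA_add)
  have pair_sub := map_sub (AddMonoidHom.mk' (fun β ↦ E'.pair β (fT X))
    fun β γ ↦ E'.pair_add_left β γ (fT X))
  simp only [AddMonoidHom.mk'_apply] at sub neg pair_sub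
  have h := congrArg fA (hV.ax4 g X Y)
  have h' := hV'.ax4 (fA g) (fT X) (fT Y)
  have hp := congrArg (E'.pair · (fT X)) hg
  simp only [sub, neg, hhom.fA_mul, hhom.map_pair, hhom.map_act] at h
  simp only [pair_sub, E'.pair_smulA_left] at hp
  rw [hhom.fT_smulA, E'.pair_smulA_right]
  linear_combination fA g * hXY - h + h' - hp

theorem eq_brΩ_smul
    (E : ExtLieAlgebroid A Ω T) {star : A → T → Ω} {br : T → T → A} {brΩ : T → T → Ω}
    (hV : IsVertexAlgebroid E star br brΩ)
    (E' : ExtLieAlgebroid A' Ω' T') {star' : A' → T' → Ω'} {br' : T' → T' → A'}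
    {brΩ' : T' → T' → Ω'}
    (hV' : IsVertexAlgebroid E' star' br' brΩ')
    {fA : A → A'} {fΩ : Ω → Ω'} {fT : T → T'}
    (hhom : IsExtLieAlgebroidHom E E' fA fΩ fT)
    {Δ : T → Ω'}
    (hΔ_add : ∀ X Y, Δ (X + Y) = Δ X + Δ Y)
    {g : A} {X Y : T}
    (hstar : ∀ f Z, star' (fA f) (fT Z) - fΩ (star f Z) = Δ (f • Z) - fA f • Δ Z)
    (hXY : brΩ' (fT X) (fT Y) - fΩ (brΩ X Y)
      = - E'.lie (fT X) (Δ Y) + E'.lie (fT Y) (Δ X)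
        - E'.d (E'.pair (Δ X) (fT Y)) + Δ (E.bracket X Y)) :
    brΩ' (fT X) (fT (g • Y)) - fΩ (brΩ X (g • Y))
      = - E'.lie (fT X) (Δ (g • Y)) + E'.lie (fT (g • Y)) (Δ X)
        - E'.d (E'.pair (Δ X) (fT (g • Y))) + Δ (E.bracket X (g • Y)) := by
  have sub := map_sub (AddMonoidHom.mk' fΩ hhom.fΩ_add)
  have neg := map_neg (AddMonoidHom.mk' fΩ hhom.fΩ_add)
  have lie_sub := map_sub (AddMonoidHom.mk' _ (E'.lie_add_right (fT X)))
  simp only [AddMonoidHom.mk'_apply] at sub neg lie_sub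
  have h := congrArg fΩ (hV.ax5 g X Y)
  have h' := hV'.ax5 (fA g) (fT X) (fT Y)
  have hl := congrArg (E'.lie (fT X)) (hstar g Y)
  have hact := hstar (E.act X g) Y
  have hbr := hstar g (E.bracket X Y)
  simp only [sub, neg, hhom.fΩ_add, hhom.fΩ_smulA, hhom.map_lie] at h
  simp only [lie_sub, E'.lie_smulA] at hl
  rw [hhom.map_act] at hact
  rw [hhom.map_bracket] at hbr
  rw [hhom.fT_smulA, E'.pair_smulA_right, E'.lie_smulA_left_s1, E'.d_mul, E.bracket_smulA_right,
    hΔ_add]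
  linear_combination (norm := module) fA g • hXY - h + h' - hl + hact + hbr

theorem eq_brΩ_symm
    (E : ExtLieAlgebroid A Ω T) {star : A → T → Ω} {br : T → T → A} {brΩ : T → T → Ω}
    (hV : IsVertexAlgebroid E star br brΩ)
    (E' : ExtLieAlgebroid A' Ω' T') {star' : A' → T' → Ω'} {br' : T' → T' → A'}
    {brΩ' : T' → T' → Ω'}
    (hV' : IsVertexAlgebroid E' star' br' brΩ')
    {fA : A → A'} {fΩ : Ω → Ω'} {fT : T → T'}
    (hhom : IsExtLieAlgebroidHom E E' fA fΩ fT)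
    {Δ : T → Ω'}
    (hΔ_add : ∀ X Y, Δ (X + Y) = Δ X + Δ Y)
    {X Y : T}
    (hbr : br' (fT X) (fT Y) - fA (br X Y)
      = - E'.pair (Δ X) (fT Y) - E'.pair (Δ Y) (fT X))
    (hXY : brΩ' (fT X) (fT Y) - fΩ (brΩ X Y)
      = - E'.lie (fT X) (Δ Y) + E'.lie (fT Y) (Δ X)
        - E'.d (E'.pair (Δ X) (fT Y)) + Δ (E.bracket X Y)) :
    brΩ' (fT Y) (fT X) - fΩ (brΩ Y X)
      = - E'.lie (fT Y) (Δ X) + E'.lie (fT X) (Δ Y)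
        - E'.d (E'.pair (Δ Y) (fT X)) + Δ (E.bracket Y X) := by
  have neg := map_neg (AddMonoidHom.mk' Δ hΔ_add)
  simp only [AddMonoidHom.mk'_apply] at neg
  have h := congrArg fΩ (hV.ax2 X Y)
  have h' := hV'.ax2 (fT X) (fT Y)
  have hd := congrArg E'.d hbr
  rw [hhom.map_d, hhom.fΩ_add] at h
  simp only [map_sub, map_neg] at hd
  rw [E.bracket_skew Y X, neg]
  linear_combination (norm := module) hd - hXY + h - h'

/-!
STATEMENT 1: If the three morphism equations for a candidate morphism `(φ, Δ)` of
vertex algebroids hold for all `f ∈ A` and `X, Y` in a subset `S ⊆ T` that is closed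
under the Lie bracket and spans `T` as an `A`-module, then they hold for all
`(f, X, Y) ∈ A × T × T`, i.e. `(φ, Δ)` is a morphism of vertex algebroids.
-/

theorem isVertexAlgebroidHom_of_generators
    (E : ExtLieAlgebroid A Ω T) (star : A → T → Ω) (br : T → T → A) (brΩ : T → T → Ω)
    (hV : IsVertexAlgebroid E star br brΩ)
    (E' : ExtLieAlgebroid A' Ω' T') (star' : A' → T' → Ω') (br' : T' → T' → A')
    (brΩ' : T' → T' → Ω')
    (hV' : IsVertexAlgebroid E' star' br' brΩ')
    (fA : A → A') (fΩ : Ω → Ω') (fT : T → T')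
    (hhom : IsExtLieAlgebroidHom E E' fA fΩ fT)
    (Δ : T → Ω')
    (hΔ_add : ∀ X Y, Δ (X + Y) = Δ X + Δ Y)
    (hΔ_smulC : ∀ (c : ℂ) (X), Δ (c • X) = c • Δ X)
    (S : Set T)
    (hS_bracket : ∀ X ∈ S, ∀ Y ∈ S, E.bracket X Y ∈ S)
    (hS_span : Submodule.span A S = ⊤)
    (h_star : ∀ (f : A), ∀ X ∈ S,
      star' (fA f) (fT X) - fΩ (star f X) = Δ (f • X) - fA f • Δ X)
    (h_br : ∀ X ∈ S, ∀ Y ∈ S,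
      br' (fT X) (fT Y) - fA (br X Y)
        = - E'.pair (Δ X) (fT Y) - E'.pair (Δ Y) (fT X))
    (h_brΩ : ∀ X ∈ S, ∀ Y ∈ S,
      brΩ' (fT X) (fT Y) - fΩ (brΩ X Y)
        = - E'.lie (fT X) (Δ Y) + E'.lie (fT Y) (Δ X)
          - E'.d (E'.pair (Δ X) (fT Y)) + Δ (E.bracket X Y)) :
    (∀ (f : A) (X : T),
      star' (fA f) (fT X) - fΩ (star f X) = Δ (f • X) - fA f • Δ X) ∧
    (∀ X Y : T,
      br' (fT X) (fT Y) - fA (br X Y)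
        = - E'.pair (Δ X) (fT Y) - E'.pair (Δ Y) (fT X)) ∧
    (∀ X Y : T,
      brΩ' (fT X) (fT Y) - fΩ (brΩ X Y)
        = - E'.lie (fT X) (Δ Y) + E'.lie (fT Y) (Δ X)
          - E'.d (E'.pair (Δ X) (fT Y)) + Δ (E.bracket X Y)) ∧
    IsVertexAlgebroidHom E star br brΩ E' star' br' brΩ' fA fΩ fT Δ := by
  have fA_zero := map_zero (AddMonoidHom.mk' fA hhom.fA_add)
  have fΩ_zero := map_zero (AddMonoidHom.mk' fΩ hhom.fΩ_add)
  have fT_zero := map_zero (AddMonoidHom.mk' fT hhom.fT_add)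
  have Δ_zero := map_zero (AddMonoidHom.mk' Δ hΔ_add)
  have star_zero : ∀ f, star f 0 = 0 := fun f ↦
    map_zero (AddMonoidHom.mk' _ (hV.star_add_right f))
  have star_zero' : ∀ f, star' f 0 = 0 := fun f ↦
    map_zero (AddMonoidHom.mk' _ (hV'.star_add_right f))
  have br_zero : ∀ X, br X 0 = 0 := fun X ↦ map_zero (AddMonoidHom.mk' _ (hV.br_add_right X))
  have br_zero' : ∀ X, br' X 0 = 0 := fun X ↦ map_zero (AddMonoidHom.mk' _ (hV'.br_add_right X))
  have brΩ_zero : ∀ X, brΩ X 0 = 0 := fun X ↦ map_zero (AddMonoidHom.mk' _ (hV.brΩ_add_right X))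
  have brΩ_zero' : ∀ X, brΩ' X 0 = 0 := fun X ↦
    map_zero (AddMonoidHom.mk' _ (hV'.brΩ_add_right X))
  have bracket_zero : ∀ X, E.bracket X 0 = 0 := fun X ↦
    map_zero (AddMonoidHom.mk' _ (E.bracket_add_right X))
  have pair_zero_left : ∀ X, E'.pair 0 X = 0 := fun X ↦
    map_zero (AddMonoidHom.mk' (fun β ↦ E'.pair β X) fun β γ ↦ E'.pair_add_left β γ X)
  have pair_zero : ∀ α, E'.pair α 0 = 0 := fun α ↦
    map_zero (AddMonoidHom.mk' _ (E'.pair_add_right α))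
  have lie_zero_left : ∀ α, E'.lie 0 α = 0 := fun α ↦
    map_zero (AddMonoidHom.mk' (fun X ↦ E'.lie X α) fun X Y ↦ E'.lie_add_left X Y α)
  have lie_zero : ∀ X, E'.lie X 0 = 0 := fun X ↦
    map_zero (AddMonoidHom.mk' _ (E'.lie_add_right X))
  simp only [AddMonoidHom.mk'_apply] at fA_zero fΩ_zero fT_zero Δ_zero
  have mem_span : ∀ X : T, X ∈ Submodule.span A S := fun X ↦ hS_span ▸ Submodule.mem_top
  have hstar : ∀ (f : A) (X : T),
      star' (fA f) (fT X) - fΩ (star f X) = Δ (f • X) - fA f • Δ X := by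
    intro f X
    induction mem_span X using Submodule.span_induction generalizing f with
    | mem X hX => exact h_star f X hX
    | zero => simp [fT_zero, star_zero, star_zero', fΩ_zero, Δ_zero]
    | add X Y _ _ hX hY =>
      rw [hhom.fT_add, hV'.star_add_right, hV.star_add_right, hhom.fΩ_add, smul_add, hΔ_add,
        hΔ_add]
      linear_combination (norm := module) hX f + hY f
    | smul g X _ hX => exact eq_star_smul E hV E' hV' hhom (hX (f * g)) (hX g)
  have br_extend : ∀ X : T,
      (∀ Y ∈ S, br' (fT X) (fT Y) - fA (br X Y)
        = - E'.pair (Δ X) (fT Y) - E'.pair (Δ Y) (fT X)) →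
      ∀ Y, br' (fT X) (fT Y) - fA (br X Y)
        = - E'.pair (Δ X) (fT Y) - E'.pair (Δ Y) (fT X) := by
    intro X hX Y
    induction mem_span Y using Submodule.span_induction with
    | mem Y hY => exact hX Y hY
    | zero => simp [fT_zero, br_zero, br_zero', fA_zero, Δ_zero, pair_zero, pair_zero_left]
    | add Y Z _ _ hY hZ =>
      rw [hhom.fT_add, hV'.br_add_right, hV.br_add_right, hhom.fA_add, hΔ_add,
        E'.pair_add_right, E'.pair_add_left]
      linear_combination hY + hZ
    | smul g Y _ hY => exact eq_br_smul E hV E' hV' hhom (hstar g Y) hY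
  have hbr : ∀ X Y : T, br' (fT X) (fT Y) - fA (br X Y)
      = - E'.pair (Δ X) (fT Y) - E'.pair (Δ Y) (fT X) := fun X ↦
    br_extend X fun Y hY ↦ by
      rw [hV'.ax1, hV.ax1, br_extend Y (h_br Y hY) X]
      ring
  have brΩ_extend : ∀ X : T,
      (∀ Y ∈ S, brΩ' (fT X) (fT Y) - fΩ (brΩ X Y)
        = - E'.lie (fT X) (Δ Y) + E'.lie (fT Y) (Δ X)
          - E'.d (E'.pair (Δ X) (fT Y)) + Δ (E.bracket X Y)) →
      ∀ Y, brΩ' (fT X) (fT Y) - fΩ (brΩ X Y)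
        = - E'.lie (fT X) (Δ Y) + E'.lie (fT Y) (Δ X)
          - E'.d (E'.pair (Δ X) (fT Y)) + Δ (E.bracket X Y) := by
    intro X hX Y
    induction mem_span Y using Submodule.span_induction with
    | mem Y hY => exact hX Y hY
    | zero =>
      simp [fT_zero, brΩ_zero, brΩ_zero', fΩ_zero, Δ_zero, pair_zero, lie_zero, lie_zero_left,
        bracket_zero]
    | add Y Z _ _ hY hZ =>
      rw [hhom.fT_add, hV'.brΩ_add_right, hV.brΩ_add_right, hhom.fΩ_add, hΔ_add,
        E'.pair_add_right, E'.lie_add_right, E'.lie_add_left, E.bracket_add_right, hΔ_add,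
        map_add]
      linear_combination (norm := module) hY + hZ
    | smul g Y _ hY => exact eq_brΩ_smul E hV E' hV' hhom hΔ_add hstar hY
  have hbrΩ : ∀ X Y : T, brΩ' (fT X) (fT Y) - fΩ (brΩ X Y)
      = - E'.lie (fT X) (Δ Y) + E'.lie (fT Y) (Δ X)
        - E'.d (E'.pair (Δ X) (fT Y)) + Δ (E.bracket X Y) := fun X ↦
    brΩ_extend X fun Y hY ↦
      eq_brΩ_symm E hV E' hV' hhom hΔ_add (hbr Y X) (brΩ_extend Y (h_brΩ Y hY) X)
  exact ⟨hstar, hbr, hbrΩ, hhom, hΔ_add, hΔ_smulC, hstar, hbr, hbrΩ⟩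
end

section
/- Let W ⊆ ℝ^p be open and let g: W → Matrix n n ℂ be a smooth map such that g(x) is invertible for every x ∈ W. Then the ℂ-valued 1-form tr(θ_g), where θ_g = g⁻¹·dg, is closed: for all x ∈ W and u, v ∈ ℝ^p, D_u(y ↦ tr(θ_g(y)(v)))(x) = D_v(y ↦ tr(θ_g(y)(u)))(x). -/
/-!
STATEMENT 5: The 1-form tr(θ_g) is closed, where θ_g = g⁻¹·dg for a smooth
map g : W → Matrix n n ℂ with invertible values on an open set W ⊆ ℝ^p.
-/

attribute [local instance] Matrix.normedAddCommGroup Matrix.normedSpace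

/-- The Maurer–Cartan form `θ_g(x)(v) = (g x)⁻¹ · (D_v g)(x)` of a matrix-valued map. -/
noncomputable def mcForm {p n : ℕ}
    (g : (Fin p → ℝ) → Matrix (Fin n) (Fin n) ℂ)
    (x v : Fin p → ℝ) : Matrix (Fin n) (Fin n) ℂ :=
  (g x)⁻¹ * fderiv ℝ g x v

open Filter Topology

section MatrixCalculus

variable {E m : Type*} [NormedAddCommGroup E] [NormedSpace ℝ E] [Fintype m]

/-- The product rule for matrix multiplication, with respect to the entrywise sup norm. -/
theorem differentiableAt_and_fderiv_matrix_mul_apply {a b : E → Matrix m m ℂ} {x : E}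
    (ha : DifferentiableAt ℝ a x) (hb : DifferentiableAt ℝ b x) (u : E) :
    DifferentiableAt ℝ (fun y => a y * b y) x ∧
      fderiv ℝ (fun y => a y * b y) x u = a x * fderiv ℝ b x u + fderiv ℝ a x u * b x := by
  let B : Matrix m m ℂ →L[ℝ] Matrix m m ℂ →L[ℝ] Matrix m m ℂ :=
    (LinearMap.mul ℝ (Matrix m m ℂ)).toContinuousBilinearMap
  have h : HasFDerivAt (fun y => a y * b y) _ x :=
    B.hasFDerivAt_of_bilinear ha.hasFDerivAt hb.hasFDerivAt
  exact ⟨h.differentiableAt, by rw [h.fderiv]; rfl⟩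

theorem DifferentiableAt.matrix_apply {a : E → Matrix m m ℂ} {x : E}
    (ha : DifferentiableAt ℝ a x) (i j : m) : DifferentiableAt ℝ (fun y => a y i j) x :=
  differentiableAt_pi.1 (differentiableAt_pi.1 ha i) j

variable [DecidableEq m]

theorem DifferentiableAt.matrix_det {a : E → Matrix m m ℂ} {x : E}
    (ha : ∀ i j, DifferentiableAt ℝ (fun y => a y i j) x) :
    DifferentiableAt ℝ (fun y => (a y).det) x := by
  simp only [Matrix.det_apply']
  fun_prop

theorem DifferentiableAt.matrix_inv {a : E → Matrix m m ℂ} {x : E}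
    (ha : DifferentiableAt ℝ a x) (hx : IsUnit (a x)) :
    DifferentiableAt ℝ (fun y => (a y)⁻¹) x := by
  have hdet : (a x).det ≠ 0 := ((Matrix.isUnit_iff_isUnit_det _).1 hx).ne_zero
  refine differentiableAt_pi.2 fun i => differentiableAt_pi.2 fun j => ?_
  simp only [Matrix.inv_def, Ring.inverse_eq_inv', Matrix.smul_apply, smul_eq_mul,
    Matrix.adjugate_apply]
  refine ((DifferentiableAt.matrix_det ha.matrix_apply).inv hdet).mul
    (DifferentiableAt.matrix_det fun k l => ?_)
  by_cases hk : k = j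
  · subst hk
    simp
  · simpa [Matrix.updateRow_ne hk] using ha.matrix_apply k l

theorem fderiv_matrix_inv_apply {a : E → Matrix m m ℂ} {x : E}
    (ha : DifferentiableAt ℝ a x) (hunit : ∀ᶠ y in 𝓝 x, IsUnit (a y)) (u : E) :
    fderiv ℝ (fun y => (a y)⁻¹) x u = -((a x)⁻¹ * fderiv ℝ a x u * (a x)⁻¹) := by
  have hx : IsUnit (a x).det := (Matrix.isUnit_iff_isUnit_det _).1 hunit.self_of_nhds
  have hone : (fun y => (a y)⁻¹ * a y) =ᶠ[𝓝 x] fun _ => 1 :=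
    hunit.mono fun y hy => Matrix.nonsing_inv_mul _ ((Matrix.isUnit_iff_isUnit_det _).1 hy)
  have hprod := (differentiableAt_and_fderiv_matrix_mul_apply (ha.matrix_inv hunit.self_of_nhds) ha u).2
  rw [hone.fderiv_eq, fderiv_fun_const] at hprod
  have hmul := congrArg (· * (a x)⁻¹) (eq_neg_of_add_eq_zero_right hprod.symm)
  simpa [Matrix.mul_assoc, Matrix.mul_nonsing_inv _ hx] using hmul

end MatrixCalculus

theorem fderiv_trace_mcForm {p n : ℕ} {g : (Fin p → ℝ) → Matrix (Fin n) (Fin n) ℂ}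
    {x : Fin p → ℝ} (hg : ContDiffAt ℝ 2 g x) (hunit : ∀ᶠ y in 𝓝 x, IsUnit (g y))
    (u v : Fin p → ℝ) :
    fderiv ℝ (fun y => (mcForm g y v).trace) x u =
      ((g x)⁻¹ * fderiv ℝ (fderiv ℝ g) x u v).trace - (mcForm g x u * mcForm g x v).trace := by
  have hdg : DifferentiableAt ℝ g x := hg.differentiableAt (by norm_num)
  have hddg : DifferentiableAt ℝ (fderiv ℝ g) x :=
    (hg.fderiv_right (m := 1) (by norm_num)).differentiableAt (by norm_num)
  have hdir : HasFDerivAt (fun y => fderiv ℝ g y v) ((fderiv ℝ (fderiv ℝ g) x).flip v) x :=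
    (ContinuousLinearMap.apply ℝ (Matrix (Fin n) (Fin n) ℂ) v).hasFDerivAt.comp x hddg.hasFDerivAt
  obtain ⟨hdiff, hval⟩ := differentiableAt_and_fderiv_matrix_mul_apply
    (hdg.matrix_inv hunit.self_of_nhds) hdir.differentiableAt u
  have hdirval : fderiv ℝ (fun y => fderiv ℝ g y v) x u = fderiv ℝ (fderiv ℝ g) x u v :=
    DFunLike.congr_fun hdir.fderiv u
  have hinv := fderiv_matrix_inv_apply hdg hunit u
  let T : Matrix (Fin n) (Fin n) ℂ →L[ℝ] ℂ :=
    (Matrix.traceLinearMap (Fin n) ℝ ℂ).toContinuousLinearMap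
  have htrace : HasFDerivAt (fun y => (mcForm g y v).trace) _ x :=
    T.hasFDerivAt.comp x hdiff.hasFDerivAt
  rw [htrace.fderiv]
  change Matrix.trace (fderiv ℝ (fun y => (g y)⁻¹ * fderiv ℝ g y v) x u) = _
  rw [hval, hinv, hdirval]
  simp [mcForm, Matrix.mul_assoc, sub_eq_add_neg]

theorem trace_maurer_cartan_closed {p n : ℕ} (hp : 0 < p) (hn : 0 < n)
    {W : Set (Fin p → ℝ)} (hW : IsOpen W)
    (g : (Fin p → ℝ) → Matrix (Fin n) (Fin n) ℂ)
    (hg : ContDiffOn ℝ (⊤ : ℕ∞) g W)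
    (hginv : ∀ x ∈ W, IsUnit (g x)) :
    ∀ x ∈ W, ∀ u v : Fin p → ℝ,
      fderiv ℝ (fun y => (mcForm g y v).trace) x u
        = fderiv ℝ (fun y => (mcForm g y u).trace) x v := by
  intro x hx u v
  have hnhds : W ∈ 𝓝 x := hW.mem_nhds hx
  have hg2 : ContDiffAt ℝ 2 g x := (hg.contDiffAt hnhds).of_le (WithTop.coe_le_coe.2 le_top)
  have hunit : ∀ᶠ y in 𝓝 x, IsUnit (g y) := by
    filter_upwards [hnhds] with y hy using hginv y hy
  have hsymm : fderiv ℝ (fderiv ℝ g) x u v = fderiv ℝ (fderiv ℝ g) x v u :=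
    (hg2.isSymmSndFDerivAt (by simp)).eq u v
  rw [fderiv_trace_mcForm hg2 hunit, fderiv_trace_mcForm hg2 hunit, hsymm,
    Matrix.trace_mul_comm (mcForm g x u)]
end

section
/- Let W, W', W'' ⊆ ℝ^p be open and let φ: W → W' and φ': W' → W'' be smooth diffeomorphisms. Define the ℂ-valued 2-form σ_{φ',φ} := tr(θ_φ ∧ (g_φ⁻¹·(φ*θ_{φ'})·g_φ)) on W. Then the Wess–Zumino 3-forms of the Jacobians satisfy WZ_{φ'∘φ} = WZ_φ + φ*(WZ_{φ'}) + d(σ_{φ',φ}). -/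
/-!
STATEMENT 9: For smooth diffeomorphisms φ : W → W' and φ' : W' → W'' between open
subsets of ℝ^p, the Wess–Zumino 3-forms of the Jacobians satisfy
WZ_{φ'∘φ} = WZ_φ + φ*(WZ_{φ'}) + d(σ_{φ',φ}), where
σ_{φ',φ} = tr(θ_φ ∧ (g_φ⁻¹·(φ*θ_{φ'})·g_φ)).
-/

attribute [local instance] Matrix.normedAddCommGroup Matrix.normedSpace

/-- The complexified Jacobian matrix of a map ψ : ℝ^p → ℝ^p. -/
noncomputable def jacobian {p : ℕ} (ψ : (Fin p → ℝ) → (Fin p → ℝ))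
    (x : Fin p → ℝ) : Matrix (Fin p) (Fin p) ℂ :=
  Matrix.of fun i j => ((fderiv ℝ ψ x (Pi.single j 1) i : ℝ) : ℂ)

/-- The Maurer–Cartan form `θ_ψ(x)(v) = (g_ψ x)⁻¹ · (D_v g_ψ)(x)` of the Jacobian. -/
noncomputable def mcJac {p : ℕ} (ψ : (Fin p → ℝ) → (Fin p → ℝ))
    (x v : Fin p → ℝ) : Matrix (Fin p) (Fin p) ℂ :=
  (jacobian ψ x)⁻¹ * fderiv ℝ (jacobian ψ) x v

/-- The Wess–Zumino 3-form `WZ_ψ = (1/3)·tr(θ_ψ ∧ θ_ψ ∧ θ_ψ)`. -/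
noncomputable def wzJac {p : ℕ} (ψ : (Fin p → ℝ) → (Fin p → ℝ))
    (x : Fin p → ℝ) (w : Fin 3 → (Fin p → ℝ)) : ℂ :=
  (1 / 3 : ℂ) * ∑ σ : Equiv.Perm (Fin 3),
    ((Equiv.Perm.sign σ : ℤ) : ℂ) *
      (mcJac ψ x (w (σ 0)) * mcJac ψ x (w (σ 1)) * mcJac ψ x (w (σ 2))).trace

/-- The 2-form `σ_{φ',φ} = tr(θ_φ ∧ (g_φ⁻¹·(φ*θ_{φ'})·g_φ))`. -/
noncomputable def sigmaForm {p : ℕ} (φ' φ : (Fin p → ℝ) → (Fin p → ℝ))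
    (x : Fin p → ℝ) (u v : Fin p → ℝ) : ℂ :=
  (mcJac φ x u *
      ((jacobian φ x)⁻¹ * mcJac φ' (φ x) (fderiv ℝ φ x v) * jacobian φ x)).trace
    - (mcJac φ x v *
      ((jacobian φ x)⁻¹ * mcJac φ' (φ x) (fderiv ℝ φ x u) * jacobian φ x)).trace

open Filter Topology

section MatrixForms

variable {E n : Type*} [NormedAddCommGroup E] [NormedSpace ℝ E] [Fintype n]

theorem fderiv_matrix_trace {a : E → Matrix n n ℂ} {x : E} (ha : DifferentiableAt ℝ a x) :
    DifferentiableAt ℝ (fun y => (a y).trace) x ∧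
      ∀ v, fderiv ℝ (fun y => (a y).trace) x v = (fderiv ℝ a x v).trace := by
  let T : Matrix n n ℂ →L[ℝ] ℂ := LinearMap.toContinuousLinearMap (Matrix.traceLinearMap n ℝ ℂ)
  have h := T.hasFDerivAt.comp x ha.hasFDerivAt
  refine ⟨h.differentiableAt, fun v => ?_⟩
  have h2 := h.fderiv
  change fderiv ℝ (fun y => (a y).trace) x = _ at h2
  rw [h2]
  rfl

theorem sum_sign_mul_trace (R : Fin 3 → Matrix n n ℂ) :
    (1 / 3 : ℂ) * ∑ σ : Equiv.Perm (Fin 3), ((Equiv.Perm.sign σ : ℤ) : ℂ) *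
        (R (σ 0) * R (σ 1) * R (σ 2)).trace =
      (R 0 * R 1 * R 2).trace - (R 0 * R 2 * R 1).trace := by
  have hu : (Finset.univ : Finset (Equiv.Perm (Fin 3))) =
      {1, .swap 0 1, .swap 0 2, .swap 1 2, .swap 0 1 * .swap 1 2, .swap 1 2 * .swap 0 1} := by
    decide
  have e1 := Matrix.trace_mul_cycle (R 0) (R 1) (R 2)
  have e2 := Matrix.trace_mul_cycle (R 2) (R 0) (R 1)
  have e3 := Matrix.trace_mul_cycle (R 0) (R 2) (R 1)
  have e4 := Matrix.trace_mul_cycle (R 1) (R 0) (R 2)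
  have s1 : Equiv.swap (0 : Fin 3) 1 2 = 2 := by decide
  have s2 : Equiv.swap (0 : Fin 3) 2 1 = 1 := by decide
  have s3 : Equiv.swap (1 : Fin 3) 2 0 = 0 := by decide
  rw [hu, Finset.sum_insert (by decide), Finset.sum_insert (by decide),
    Finset.sum_insert (by decide), Finset.sum_insert (by decide), Finset.sum_insert (by decide),
    Finset.sum_singleton]
  simp [s1, s2, s3]
  linear_combination (-1 / 3 : ℂ) * (2 * e1 + e2) + (1 / 3 : ℂ) * (2 * e3 + e4)

variable [DecidableEq n]

theorem fderiv_matrix_mul {a b : E → Matrix n n ℂ} {x : E}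
    (ha : DifferentiableAt ℝ a x) (hb : DifferentiableAt ℝ b x) :
    DifferentiableAt ℝ (fun y => a y * b y) x ∧ ∀ v,
      fderiv ℝ (fun y => a y * b y) x v = fderiv ℝ a x v * b x + a x * fderiv ℝ b x v := by
  let B : Matrix n n ℂ →L[ℝ] Matrix n n ℂ →L[ℝ] Matrix n n ℂ :=
    LinearMap.toContinuousBilinearMap (LinearMap.mul ℝ (Matrix n n ℂ))
  have h := B.hasFDerivAt_of_bilinear ha.hasFDerivAt hb.hasFDerivAt
  refine ⟨h.differentiableAt, fun v => ?_⟩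
  have h2 := h.fderiv
  change fderiv ℝ (fun y => a y * b y) x = _ at h2
  rw [h2, add_comm]
  rfl

/-- The derivative of a matrix inverse, `D_v g⁻¹ = -g⁻¹ · D_v g · g⁻¹`. -/
theorem fderiv_matrix_inverse_apply {g gi : E → Matrix n n ℂ} {x : E}
    (hg : DifferentiableAt ℝ g x) (hgi : DifferentiableAt ℝ gi x)
    (hinv : ∀ᶠ y in 𝓝 x, gi y * g y = 1) (v : E) :
    fderiv ℝ gi x v = -(gi x * fderiv ℝ g x v * gi x) := by
  have h := (fderiv_matrix_mul hgi hg).2 v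
  have hc : (fun y => gi y * g y) =ᶠ[𝓝 x] fun _ => 1 := hinv
  have hr : g x * gi x = 1 := mul_eq_one_comm.1 hinv.self_of_nhds
  rw [hc.fderiv_eq, fderiv_const_apply] at h
  have h3 := congrArg (· * gi x) h
  simp only [zero_apply, zero_mul, add_mul, Matrix.mul_assoc, hr, mul_one] at h3
  rw [eq_neg_iff_add_eq_zero, Matrix.mul_assoc]
  exact h3.symm

theorem trace_mul_conj (A B C g gi : Matrix n n ℂ) (h : g * gi = 1) :
    ((gi * A * g) * (gi * B * g) * (gi * C * g)).trace = (A * B * C).trace := by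
  have e : (gi * A * g) * (gi * B * g) * (gi * C * g) = gi * (A * B * C * g) := by
    simp only [Matrix.mul_assoc]
    rw [← Matrix.mul_assoc g gi, h, one_mul, ← Matrix.mul_assoc g gi, h, one_mul]
  rw [e, Matrix.trace_mul_comm, Matrix.mul_assoc, h, mul_one]

theorem trace_wedge_add (R S : Fin 3 → Matrix n n ℂ) :
    ((R 0 + S 0) * (R 1 + S 1) * (R 2 + S 2)).trace
        - ((R 0 + S 0) * (R 2 + S 2) * (R 1 + S 1)).trace =
      ((R 0 * R 1 * R 2).trace - (R 0 * R 2 * R 1).trace)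
      + ((S 0 * S 1 * S 2).trace - (S 0 * S 2 * S 1).trace)
      + ((R 0 * R 1 * S 2).trace - (R 0 * R 2 * S 1).trace
        + (R 1 * R 2 * S 0).trace - (R 1 * R 0 * S 2).trace
        + (R 2 * R 0 * S 1).trace - (R 2 * R 1 * S 0).trace)
      + ((R 0 * S 1 * S 2).trace - (R 0 * S 2 * S 1).trace
        + (R 1 * S 2 * S 0).trace - (R 1 * S 0 * S 2).trace
        + (R 2 * S 0 * S 1).trace - (R 2 * S 1 * S 0).trace) := by
  simp only [add_mul, mul_add, Matrix.trace_add]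
  have c := fun A B C : Matrix n n ℂ => Matrix.trace_mul_cycle A B C
  linear_combination c (R 0) (S 1) (R 2) - c (S 0) (R 2) (R 1) - c (R 0) (S 2) (R 1)
    + c (S 0) (R 1) (R 2) + c (S 0) (S 1) (R 2) - c (S 0) (S 2) (R 1) - c (R 1) (S 2) (S 0)
    + c (R 2) (S 1) (S 0) + c (R 2) (S 0) (R 1) - c (R 1) (S 0) (R 2)

/-- Exterior derivative of `tr((dg·g⁻¹) ∧ (h⁻¹·dh))`, evaluated in one direction. -/
theorem fderiv_trace_rightMC_mul_leftMC {g gi h hi : E → Matrix n n ℂ} {x : E}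
    (hg : ContDiffAt ℝ 2 g x) (hh : ContDiffAt ℝ 2 h x)
    (hgi : DifferentiableAt ℝ gi x) (hhi : DifferentiableAt ℝ hi x)
    (hginv : ∀ᶠ y in 𝓝 x, gi y * g y = 1) (hhinv : ∀ᶠ y in 𝓝 x, hi y * h y = 1)
    (u v w : E) :
    DifferentiableAt ℝ (fun y => (fderiv ℝ g y u * gi y * (hi y * fderiv ℝ h y v)).trace) x ∧
    fderiv ℝ (fun y => (fderiv ℝ g y u * gi y * (hi y * fderiv ℝ h y v)).trace) x w =
      (fderiv ℝ (fderiv ℝ g) x w u * gi x * (hi x * fderiv ℝ h x v)).trace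
      - ((fderiv ℝ g x u * gi x) * (fderiv ℝ g x w * gi x) * (hi x * fderiv ℝ h x v)).trace
      - ((fderiv ℝ g x u * gi x) * (hi x * fderiv ℝ h x w) * (hi x * fderiv ℝ h x v)).trace
      + (fderiv ℝ g x u * gi x * (hi x * fderiv ℝ (fderiv ℝ h) x w v)).trace := by
  have hg1 := hg.differentiableAt (by norm_num)
  have hh1 := hh.differentiableAt (by norm_num)
  have second {f : E → Matrix n n ℂ} (hf : ContDiffAt ℝ 2 f x) (u : E) :
      DifferentiableAt ℝ (fun y => fderiv ℝ f y u) x ∧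
        fderiv ℝ (fun y => fderiv ℝ f y u) x w = fderiv ℝ (fderiv ℝ f) x w u := by
    have hd : DifferentiableAt ℝ (fderiv ℝ f) x :=
      (hf.fderiv_right (m := 1) (by norm_num)).differentiableAt (by norm_num)
    have := (ContinuousLinearMap.apply ℝ (Matrix n n ℂ) u).hasFDerivAt.comp x hd.hasFDerivAt
    exact ⟨this.differentiableAt, congrArg (fun L => L w) this.fderiv⟩
  obtain ⟨dg, eg⟩ := second hg u
  obtain ⟨dh, eh⟩ := second hh v
  obtain ⟨d1, e1⟩ := fderiv_matrix_mul dg hgi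
  obtain ⟨d2, e2⟩ := fderiv_matrix_mul hhi dh
  obtain ⟨d3, e3⟩ := fderiv_matrix_mul d1 d2
  obtain ⟨d4, e4⟩ := fderiv_matrix_trace d3
  refine ⟨d4, ?_⟩
  rw [e4, e3, e1, e2, eg, eh, fderiv_matrix_inverse_apply hg1 hgi hginv,
    fderiv_matrix_inverse_apply hh1 hhi hhinv]
  simp only [add_mul, mul_add, Matrix.trace_add, mul_neg, neg_mul, Matrix.trace_neg,
    Matrix.mul_assoc]
  ring

/-- The exterior derivative of `tr((dg·g⁻¹) ∧ (h⁻¹·dh))`. -/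
theorem extDeriv_trace_rightMC_wedge_leftMC {g gi h hi : E → Matrix n n ℂ} {x : E}
    (hg : ContDiffAt ℝ 2 g x) (hh : ContDiffAt ℝ 2 h x)
    (hgi : DifferentiableAt ℝ gi x) (hhi : DifferentiableAt ℝ hi x)
    (hginv : ∀ᶠ y in 𝓝 x, gi y * g y = 1) (hhinv : ∀ᶠ y in 𝓝 x, hi y * h y = 1)
    (w : Fin 3 → E) (R S : Fin 3 → Matrix n n ℂ)
    (hR : ∀ i, fderiv ℝ g x (w i) * gi x = R i) (hS : ∀ i, hi x * fderiv ℝ h x (w i) = S i) :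
    ∑ i : Fin 3, (-1 : ℂ) ^ (i : ℕ) * fderiv ℝ (fun y =>
        (fderiv ℝ g y (w (i.succAbove 0)) * gi y * (hi y * fderiv ℝ h y (w (i.succAbove 1)))).trace
        - (fderiv ℝ g y (w (i.succAbove 1)) * gi y *
          (hi y * fderiv ℝ h y (w (i.succAbove 0)))).trace) x (w i) =
      ((R 0 * R 1 * S 2).trace - (R 0 * R 2 * S 1).trace
        + (R 1 * R 2 * S 0).trace - (R 1 * R 0 * S 2).trace
        + (R 2 * R 0 * S 1).trace - (R 2 * R 1 * S 0).trace)
      + ((R 0 * S 1 * S 2).trace - (R 0 * S 2 * S 1).trace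
        + (R 1 * S 2 * S 0).trace - (R 1 * S 0 * S 2).trace
        + (R 2 * S 0 * S 1).trace - (R 2 * S 1 * S 0).trace) := by
  have key := fun u v w => fderiv_trace_rightMC_mul_leftMC hg hh hgi hhi hginv hhinv u v w
  have sg (u v : E) : fderiv ℝ (fderiv ℝ g) x u v = fderiv ℝ (fderiv ℝ g) x v u :=
    hg.isSymmSndFDerivAt (by simp) u v
  have sh (u v : E) : fderiv ℝ (fderiv ℝ h) x u v = fderiv ℝ (fderiv ℝ h) x v u :=
    hh.isSymmSndFDerivAt (by simp) u v
  have key2 (u v w : E) := (((key u v w).1.hasFDerivAt.sub (key v u w).1.hasFDerivAt).fderiv)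
  have f1 : (1 : Fin 3).succAbove 1 = 2 := by decide
  have f2 : (2 : Fin 3).succAbove 0 = 0 := by decide
  have f3 : (2 : Fin 3).succAbove 1 = 1 := by decide
  have f4 : (0 : Fin 3).succAbove 1 = 2 := by decide
  have f5 : (0 : Fin 3).succAbove 0 = 1 := by decide
  have f6 : (1 : Fin 3).succAbove 0 = 0 := by decide
  have key3 (u v w : E) : fderiv ℝ (fun y =>
        (fderiv ℝ g y u * gi y * (hi y * fderiv ℝ h y v)).trace
        - (fderiv ℝ g y v * gi y * (hi y * fderiv ℝ h y u)).trace) x w = _ :=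
    congrArg (fun L => L w) (key2 u v w)
  simp only [Fin.sum_univ_three, f1, f2, f3, f4, f5, f6, key3, sub_apply,
    (key _ _ _).2, hR, hS]
  rw [sg (w 1) (w 0), sg (w 2) (w 0), sg (w 2) (w 1), sh (w 1) (w 0), sh (w 2) (w 0),
    sh (w 2) (w 1)]
  simp
  ring

end MatrixForms

section Jacobian

variable {p : ℕ}

theorem jacobian_eq_map_toMatrix' (ψ : (Fin p → ℝ) → (Fin p → ℝ)) (x : Fin p → ℝ) :
    jacobian ψ x =
      (LinearMap.toMatrix' (fderiv ℝ ψ x).toLinearMap).map Complex.ofRealHom := by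
  ext i j
  simp [jacobian, LinearMap.toMatrix'_apply]

theorem jacobian_comp {ψ φ : (Fin p → ℝ) → (Fin p → ℝ)} {x : Fin p → ℝ}
    (hψ : DifferentiableAt ℝ ψ (φ x)) (hφ : DifferentiableAt ℝ φ x) :
    jacobian (ψ ∘ φ) x = jacobian ψ (φ x) * jacobian φ x := by
  simp only [jacobian_eq_map_toMatrix']
  rw [fderiv_comp x hψ hφ, ContinuousLinearMap.toLinearMap_comp, LinearMap.toMatrix'_comp,
    Matrix.map_mul]

theorem jacobian_id (x : Fin p → ℝ) : jacobian id x = 1 := by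
  rw [jacobian_eq_map_toMatrix', fderiv_id]
  simp

theorem contDiffAt_jacobian {ψ : (Fin p → ℝ) → (Fin p → ℝ)} {x : Fin p → ℝ}
    (hψ : ContDiffAt ℝ 3 ψ x) : ContDiffAt ℝ 2 (jacobian ψ) x := by
  let L : ((Fin p → ℝ) →L[ℝ] (Fin p → ℝ)) →ₗ[ℝ] Matrix (Fin p) (Fin p) ℂ :=
    { toFun := fun A => Matrix.of fun i j => ((A (Pi.single j 1) i : ℝ) : ℂ)
      map_add' := fun A B => by ext; simp
      map_smul' := fun c A => by ext; simp }
  exact (LinearMap.toContinuousLinearMap L).contDiff.contDiffAt.comp x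
    (hψ.fderiv_right (m := 2) (by norm_num))

theorem jacobian_leftInverse {ψ ψi : (Fin p → ℝ) → (Fin p → ℝ)} {x : Fin p → ℝ}
    (hψ : DifferentiableAt ℝ ψ x) (hψi : DifferentiableAt ℝ ψi (ψ x))
    (h : ∀ᶠ y in 𝓝 x, ψi (ψ y) = y) : jacobian ψi (ψ x) * jacobian ψ x = 1 := by
  rw [← jacobian_comp hψi hψ, ← jacobian_id x]
  have : ψi ∘ ψ =ᶠ[𝓝 x] id := h
  simp only [jacobian_eq_map_toMatrix', this.fderiv_eq]

end Jacobian

theorem wzJac_cocycle {p : ℕ} (hp : 0 < p)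
    {W W' W'' : Set (Fin p → ℝ)} (hW : IsOpen W) (hW' : IsOpen W') (hW'' : IsOpen W'')
    (φ φinv : (Fin p → ℝ) → (Fin p → ℝ))
    (hφ : ContDiffOn ℝ (⊤ : ℕ∞) φ W) (hφmaps : Set.MapsTo φ W W')
    (hφinv : ContDiffOn ℝ (⊤ : ℕ∞) φinv W') (hφinvmaps : Set.MapsTo φinv W' W)
    (hφleft : ∀ x ∈ W, φinv (φ x) = x) (hφright : ∀ y ∈ W', φ (φinv y) = y)
    (φ' φ'inv : (Fin p → ℝ) → (Fin p → ℝ))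
    (hφ' : ContDiffOn ℝ (⊤ : ℕ∞) φ' W') (hφ'maps : Set.MapsTo φ' W' W'')
    (hφ'inv : ContDiffOn ℝ (⊤ : ℕ∞) φ'inv W'') (hφ'invmaps : Set.MapsTo φ'inv W'' W')
    (hφ'left : ∀ x ∈ W', φ'inv (φ' x) = x) (hφ'right : ∀ y ∈ W'', φ' (φ'inv y) = y) :
    ∀ x ∈ W, ∀ w : Fin 3 → (Fin p → ℝ),
      wzJac (φ' ∘ φ) x w
        = wzJac φ x w
          + wzJac φ' (φ x) (fun j => fderiv ℝ φ x (w j))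
          + ∑ i : Fin 3, (-1 : ℂ) ^ (i : ℕ) *
              fderiv ℝ
                (fun y => sigmaForm φ' φ y (w (i.succAbove 0)) (w (i.succAbove 1)))
                x (w i) := by
  intro x hx w
  have smooth {W : Set (Fin p → ℝ)} {f : (Fin p → ℝ) → (Fin p → ℝ)} (hW : IsOpen W)
      (hf : ContDiffOn ℝ (⊤ : ℕ∞) f W) {y : Fin p → ℝ} (hy : y ∈ W) : ContDiffAt ℝ 3 f y :=
    (hf.contDiffAt (hW.mem_nhds hy)).of_le (WithTop.coe_le_coe.2 (le_top : (3 : ℕ∞) ≤ ⊤))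
  have diff {f : (Fin p → ℝ) → (Fin p → ℝ)} {y : Fin p → ℝ} (hf : ContDiffAt ℝ 3 f y) :
      DifferentiableAt ℝ f y := hf.differentiableAt (by norm_num)
  have diff' {f : (Fin p → ℝ) → (Fin p → ℝ)} {y : Fin p → ℝ} (hf : ContDiffAt ℝ 3 f y) :
      DifferentiableAt ℝ (jacobian f) y := (contDiffAt_jacobian hf).differentiableAt (by norm_num)
  have sφ {y} (hy : y ∈ W) := smooth hW hφ hy
  have sφ' {y} (hy : y ∈ W) := smooth hW' hφ' (hφmaps hy)
  have sφi {y} (hy : y ∈ W) := smooth hW' hφinv (hφmaps hy)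
  have sφ'i {y} (hy : y ∈ W) := smooth hW'' hφ'inv (hφ'maps (hφmaps hy))
  let g := jacobian φ
  let gi := fun y => jacobian φinv (φ y)
  let h := fun y => jacobian φ' (φ y)
  let hi := fun y => jacobian φ'inv (φ' (φ y))
  have hgW {y} (hy : y ∈ W) : gi y * g y = 1 :=
    jacobian_leftInverse (diff (sφ hy)) (diff (sφi hy))
      (Filter.eventually_of_mem (hW.mem_nhds hy) hφleft)
  have hhW {y} (hy : y ∈ W) : hi y * h y = 1 :=
    jacobian_leftInverse (diff (sφ' hy)) (diff (sφ'i hy))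
      (Filter.eventually_of_mem (hW'.mem_nhds (hφmaps hy)) hφ'left)
  have hginv {y} (hy : y ∈ W) : (jacobian φ y)⁻¹ = gi y := Matrix.inv_eq_left_inv (hgW hy)
  have hhinv {y} (hy : y ∈ W) : (jacobian φ' (φ y))⁻¹ = hi y := Matrix.inv_eq_left_inv (hhW hy)
  have hgr {y} (hy : y ∈ W) : g y * gi y = 1 := mul_eq_one_comm.1 (hgW hy)
  have hg : ContDiffAt ℝ 2 g x := contDiffAt_jacobian (sφ hx)
  have hh : ContDiffAt ℝ 2 h x :=
    (contDiffAt_jacobian (sφ' hx)).comp x ((sφ hx).of_le (by norm_num))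
  have hgi : DifferentiableAt ℝ gi x := (diff' (sφi hx)).comp x (diff (sφ hx))
  have hhi : DifferentiableAt ℝ hi x :=
    DifferentiableAt.comp (g := jacobian φ'inv) (f := φ' ∘ φ) x (diff' (sφ'i hx))
      ((diff (sφ' hx)).comp x (diff (sφ hx)))
  have hWx := hW.mem_nhds hx
  have hpull {y} (hy : y ∈ W) (v : Fin p → ℝ) :
      mcJac φ' (φ y) (fderiv ℝ φ y v) = hi y * fderiv ℝ h y v := by
    have hc : fderiv ℝ h y v = fderiv ℝ (jacobian φ') (φ y) (fderiv ℝ φ y v) :=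
      congrArg (fun L => L v)
        ((diff' (sφ' hy)).hasFDerivAt.comp y (diff (sφ hy)).hasFDerivAt).fderiv
    rw [mcJac, hhinv hy, hc]
  have hconj {y} (hy : y ∈ W) (v : Fin p → ℝ) :
      mcJac φ y v = gi y * (fderiv ℝ g y v * gi y) * g y := by
    rw [mcJac, hginv hy, Matrix.mul_assoc, Matrix.mul_assoc, hgW hy, mul_one]
  have hsigma {y} (hy : y ∈ W) (u v : Fin p → ℝ) :
      sigmaForm φ' φ y u v =
        (fderiv ℝ g y u * gi y * (hi y * fderiv ℝ h y v)).trace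
        - (fderiv ℝ g y v * gi y * (hi y * fderiv ℝ h y u)).trace := by
    have ht (A B : Matrix (Fin p) (Fin p) ℂ) :
        ((gi y * A * g y) * (gi y * B * g y)).trace = (A * B).trace := by
      simpa [hgW hy] using trace_mul_conj A B 1 (g y) (gi y) (hgr hy)
    rw [sigmaForm, hginv hy, hpull hy, hpull hy, hconj hy, hconj hy]
    exact congrArg₂ (· - ·) (ht _ _) (ht _ _)
  have hcomp (v : Fin p → ℝ) : mcJac (φ' ∘ φ) x v =
      gi x * (fderiv ℝ g x v * gi x + hi x * fderiv ℝ h x v) * g x := by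
    have hG : jacobian (φ' ∘ φ) =ᶠ[𝓝 x] fun y => h y * g y :=
      Filter.eventually_of_mem hWx fun y hy => jacobian_comp (diff (sφ' hy)) (diff (sφ hy))
    have hGinv : (jacobian (φ' ∘ φ) x)⁻¹ = gi x * hi x := by
      rw [hG.self_of_nhds, Matrix.mul_inv_rev]
      exact congrArg₂ (· * ·) (hginv hx) (hhinv hx)
    rw [mcJac, hGinv, hG.fderiv_eq, (fderiv_matrix_mul (hh.differentiableAt (by norm_num))
      (hg.differentiableAt (by norm_num))).2]
    have e (A : Matrix (Fin p) (Fin p) ℂ) : hi x * (h x * A) = A := by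
      rw [← Matrix.mul_assoc, hhW hx, one_mul]
    simp only [mul_add, add_mul, Matrix.mul_assoc, e, hgW hx, mul_one]
    rw [add_comm]
  have hd (u v : Fin p → ℝ) : fderiv ℝ (fun y => sigmaForm φ' φ y u v) x =
      fderiv ℝ (fun y => (fderiv ℝ g y u * gi y * (hi y * fderiv ℝ h y v)).trace
        - (fderiv ℝ g y v * gi y * (hi y * fderiv ℝ h y u)).trace) x :=
    (Filter.eventuallyEq_of_mem hWx fun y hy => hsigma hy u v).fderiv_eq
  simp only [hd]
  rw [extDeriv_trace_rightMC_wedge_leftMC hg hh hgi hhi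
    (Filter.eventually_of_mem hWx fun y hy => hgW hy)
    (Filter.eventually_of_mem hWx fun y hy => hhW hy) w
    (fun i => fderiv ℝ g x (w i) * gi x) (fun i => hi x * fderiv ℝ h x (w i))
    (fun _ => rfl) (fun _ => rfl)]
  have wz (ψ : (Fin p → ℝ) → (Fin p → ℝ)) (y : Fin p → ℝ) (w : Fin 3 → (Fin p → ℝ)) :
      wzJac ψ y w = (mcJac ψ y (w 0) * mcJac ψ y (w 1) * mcJac ψ y (w 2)).trace
        - (mcJac ψ y (w 0) * mcJac ψ y (w 2) * mcJac ψ y (w 1)).trace :=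
    sum_sign_mul_trace fun i => mcJac ψ y (w i)
  simp only [wz, hcomp, hconj hx, hpull hx, trace_mul_conj _ _ _ _ _ (hgr hx)]
  rw [trace_wedge_add (fun i => fderiv ℝ g x (w i) * gi x) fun i => hi x * fderiv ℝ h x (w i)]
  ring
end
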